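/- Let n ≥ 1, let 1 < p < ∞, let w be a weight on ℝⁿ satisfying the Berezhnoi–Muckenhoupt condition for exponent p, and let C ⊆ ℝⁿ be a nonempty open cone with vertex at the origin. Let a ∈ L^∞(ℝⁿ;ℂ) and suppose there is M ≥ 0 such that ‖F^{-1}(a·Fu)‖_{L^p(ℝⁿ,w)} ≤ M‖u‖_{L^p(ℝⁿ,w)} for all u ∈ L²(ℝⁿ) ∩ L^p(ℝⁿ,w) (i.e., a is a Fourier multiplier on L^p(ℝⁿ,w)). Then ‖a‖_{L^∞(ℝⁿ)} ≤ sup{ ‖W_C(a)u‖_{L^p(C,w)} : u ∈ L²(C) ∩ L^p(C,w), ‖u‖_{L^p(C,w)} ≤ 1 }. -/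

import Mathlib

open MeasureTheory Filter Metric Complex ENNReal NNReal

noncomputable section

abbrev Eucl (n : ℕ) := EuclideanSpace ℝ (Fin n)

/-- The Fourier integral with the convention `(Fu)(ξ) = ∫ u(x) e^{-i x·ξ} dx`. -/
def fourierInt {n : ℕ} (u : Eucl n → ℂ) (ξ : Eucl n) : ℂ :=
  ∫ x : Eucl n, Complex.exp (-(Complex.I * ((inner ℝ x ξ : ℝ) : ℂ))) * u x

/-- The inverse Fourier integral `(F⁻¹u)(x) = (2π)^{-n} ∫ u(ξ) e^{i x·ξ} dξ`. -/
def fourierIntInv {n : ℕ} (u : Eucl n → ℂ) (x : Eucl n) : ℂ :=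
  (((2 * Real.pi) ^ n : ℝ)⁻¹ : ℂ) •
    ∫ ξ : Eucl n, Complex.exp (Complex.I * ((inner ℝ x ξ : ℝ) : ℂ)) * u ξ

/-- A pair consisting of the Fourier–Plancherel transform on `L²(ℝⁿ;ℂ)` and its inverse:
continuous linear maps on `L²` that are mutually inverse and agree with the Fourier
integral (resp. the inverse Fourier integral) on `L¹ ∩ L²`.  Such a pair exists and is
unique by Plancherel's theorem. -/
structure FourierPlancherelPair (n : ℕ) where
  F : Lp ℂ 2 (volume : Measure (Eucl n)) →L[ℂ] Lp ℂ 2 (volume : Measure (Eucl n))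
  Finv : Lp ℂ 2 (volume : Measure (Eucl n)) →L[ℂ] Lp ℂ 2 (volume : Measure (Eucl n))
  inv_comp : ∀ u, Finv (F u) = u
  comp_inv : ∀ u, F (Finv u) = u
  F_int : ∀ (u : Eucl n → ℂ), Integrable u → ∀ (hu2 : MemLp u 2 (volume : Measure (Eucl n))),
    (F (hu2.toLp u) : Eucl n → ℂ) =ᵐ[volume] fourierInt u
  Finv_int : ∀ (u : Eucl n → ℂ), Integrable u → ∀ (hu2 : MemLp u 2 (volume : Measure (Eucl n))),
    (Finv (hu2.toLp u) : Eucl n → ℂ) =ᵐ[volume] fourierIntInv u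

/-- Multiplication by an `L^∞` function as a map on `L²`. -/
def mulOp {n : ℕ} (a : Eucl n → ℂ) (ha : MemLp a ⊤ (volume : Measure (Eucl n)))
    (v : Lp ℂ 2 (volume : Measure (Eucl n))) : Lp ℂ 2 (volume : Measure (Eucl n)) :=
  (((Lp.memLp v).smul ha : MemLp (a • (v : Eucl n → ℂ)) 2 volume)).toLp _

/-- The Wiener–Hopf type operator `W_Ω(a) u = r_Ω F⁻¹ (a · F(e_Ω u))`, realised as a
function on `ℝⁿ` supported in `Ω` (i.e. `e_Ω W_Ω(a) u`). -/
def WOp {n : ℕ} (FP : FourierPlancherelPair n) (a : Eucl n → ℂ)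
    (ha : MemLp a ⊤ (volume : Measure (Eucl n))) (Ω : Set (Eucl n)) (u : Eucl n → ℂ)
    (hu : MemLp (Ω.indicator u) 2 (volume : Measure (Eucl n))) : Eucl n → ℂ :=
  Ω.indicator (FP.Finv (mulOp a ha (FP.F (hu.toLp _))) : Eucl n → ℂ)

/-- The norm of `f` in the weighted Lebesgue space `L^p(ℝⁿ, w)`, i.e.
`(∫ |f(x) w(x)|^p dx)^{1/p}`, computed in `[0,∞]`. -/
def wLpNorm {n : ℕ} (f : Eucl n → ℂ) (p : ℝ) (w : Eucl n → ℝ≥0∞) : ℝ≥0∞ :=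
  (∫⁻ x : Eucl n, (‖f x‖₊ : ℝ≥0∞) ^ p * w x ^ p) ^ (1 / p)

/-- The Berezhnoi–Muckenhoupt condition for a weight `w : ℝⁿ → [0,∞]` and an exponent
`p ∈ (1,∞)` with conjugate exponent `q`:
`sup_B |B|⁻¹ (∫_B w^p)^{1/p} (∫_B w^{-q})^{1/q} < ∞`, the supremum being over all balls. -/
def BMCondition {n : ℕ} (w : Eucl n → ℝ≥0∞) (p q : ℝ) : Prop :=
  ∃ K : ℝ≥0∞, K ≠ ∞ ∧ ∀ (y : Eucl n) (r : ℝ), 0 < r →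
    (volume (ball y r))⁻¹ * (∫⁻ x in ball y r, w x ^ p) ^ (1 / p) *
      (∫⁻ x in ball y r, (w x)⁻¹ ^ q) ^ (1 / q) ≤ K



lemma conv_zero {n : ℕ} (g : Eucl n → ℂ) (hg : Integrable g) (G : ℝ) (hG : ∀ z, ‖g z‖ ≤ G)
    (a : Eucl n → ℂ) (ham : AEStronglyMeasurable a volume) (A : ℝ)
    (hA : ∀ᵐ x, ‖a x‖ ≤ A) (η : Eucl n) (hη : ‖a η‖ ≤ A)
    (hleb : Tendsto (fun r : ℝ => ⨍ y in closedBall η r, ‖a y - a η‖)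
      (nhdsWithin 0 (Set.Ioi 0)) (nhds 0)) :
    Tendsto (fun R : ℝ => ∫ ξ, ‖a ξ - a η‖ * (R ^ n * ‖g (R • (ξ - η))‖)) atTop (nhds 0) := by
  have hA0 : 0 ≤ A := (norm_nonneg _).trans hη
  have hG0 : 0 ≤ G := (norm_nonneg _).trans (hG 0)
  rw [Metric.tendsto_atTop']
  intro ε hε
  obtain ⟨δ, hδ, hδε⟩ : ∃ δ : ℝ, 0 < δ ∧ 2 * A * δ < ε / 2 := by
    refine ⟨ε / (4 * (A + 1)), by positivity, ?_⟩
    rw [← mul_div_assoc, div_lt_iff₀ (by positivity)]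
    nlinarith
  -- tail
  have htail : Tendsto (fun k : ℕ => ∫ z in (closedBall (0 : Eucl n) k)ᶜ, ‖g z‖) atTop
      (nhds 0) := by
    have := tendsto_setIntegral_of_antitone (μ := (volume : Measure (Eucl n)))
      (f := fun z => ‖g z‖)
      (s := fun k : ℕ => (closedBall (0 : Eucl n) k)ᶜ)
      (fun i => measurableSet_closedBall.compl)
      (fun i j hij => Set.compl_subset_compl.2 (closedBall_subset_closedBall (by exact_mod_cast hij)))
      ⟨0, hg.norm.integrableOn⟩
    have he : (⋂ k : ℕ, (closedBall (0 : Eucl n) (k : ℝ))ᶜ) = ∅ := by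
      rw [← Set.compl_iUnion, Metric.iUnion_closedBall_nat, Set.compl_univ]
    rwa [he, Measure.restrict_empty, integral_zero_measure] at this
  obtain ⟨k, hk1, hk2⟩ := ((htail.eventually (gt_mem_nhds hδ)).and (eventually_ge_atTop 1)).exists
  set L : ℝ := (k : ℝ) with hL
  have hL0 : 0 < L := by rw [hL]; exact_mod_cast hk2
  set V : ℝ := volume.real (closedBall (0 : Eucl n) L)
  have hlim : Tendsto (fun R : ℝ => G * V * ⨍ y in closedBall η (L / R), ‖a y - a η‖) atTop
      (nhds 0) := by
    have h1 : Tendsto (fun R : ℝ => L / R) atTop (nhdsWithin 0 (Set.Ioi 0)) := by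
      rw [tendsto_nhdsWithin_iff]
      refine ⟨tendsto_const_nhds.div_atTop tendsto_id, ?_⟩
      filter_upwards [eventually_gt_atTop 0] with R hR
      exact div_pos hL0 hR
    simpa using (hleb.comp h1).const_mul (G * V)
  obtain ⟨R0, hR0⟩ := (((hlim.eventually (gt_mem_nhds (half_pos hε))).and
    (eventually_gt_atTop 0))).exists_forall_of_atTop
  refine ⟨R0, fun R hR => ?_⟩
  obtain ⟨h1, hRpos⟩ := hR0 R hR.le
  have hnn : 0 ≤ ∫ ξ, ‖a ξ - a η‖ * (R ^ n * ‖g (R • (ξ - η))‖) :=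
    integral_nonneg fun ξ => by positivity
  rw [Real.dist_eq, sub_zero, abs_of_nonneg hnn]
  set h : Eucl n → ℝ := (closedBall (0 : Eucl n) L)ᶜ.indicator (fun z => ‖g z‖) with hh
  have hhint : Integrable h := hg.norm.indicator measurableSet_closedBall.compl
  have hhs : Integrable (fun ξ => h (R • (ξ - η))) :=
    (hhint.comp_smul hRpos.ne').comp_sub_right η
  have hhI : ∫ ξ, h (R • (ξ - η)) = (R ^ n)⁻¹ * ∫ z in (closedBall (0 : Eucl n) L)ᶜ, ‖g z‖ := by
    rw [integral_sub_right_eq_self (fun ξ => h (R • ξ)) η,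
      Measure.integral_comp_smul_of_nonneg volume h R (hR := hRpos.le), hh,
      integral_indicator measurableSet_closedBall.compl]
    simp
  set f1 : Eucl n → ℝ := (closedBall η (L / R)).indicator
    (fun ξ => ‖a ξ - a η‖ * (R ^ n * G)) with hf1
  have hIon : IntegrableOn (fun ξ => ‖a ξ - a η‖) (closedBall η (L / R)) := by
    refine Measure.integrableOn_of_bounded (M := 2 * A) measure_closedBall_lt_top.ne
      (ham.sub aestronglyMeasurable_const).norm ?_
    filter_upwards [ae_restrict_of_ae hA] with x hx
    rw [norm_norm]
    linarith [norm_sub_le (a x) (a η)]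
  have hf1i : Integrable f1 := by
    rw [hf1, integrable_indicator_iff measurableSet_closedBall]
    exact hIon.mul_const _
  have hvol : R ^ n * volume.real (closedBall η (L / R)) = V := by
    have := Measure.addHaar_real_closedBall (volume : Measure (Eucl n)) η (div_pos hL0 hRpos).le
    have h2 := Measure.addHaar_real_closedBall (volume : Measure (Eucl n)) 0 hL0.le
    simp only [finrank_euclideanSpace, Fintype.card_fin] at this h2
    rw [this]; change _ = volume.real (closedBall (0 : Eucl n) L)
    rw [h2, div_pow]
    field_simp
  have hf1I : ∫ ξ, f1 ξ = G * V * ⨍ y in closedBall η (L / R), ‖a y - a η‖ := by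
    rw [hf1, integral_indicator measurableSet_closedBall, integral_mul_const, setAverage_eq,
      ← hvol, smul_eq_mul]
    have : volume.real (closedBall η (L / R)) ≠ 0 := by
      exact (ENNReal.toReal_pos (measure_closedBall_pos _ _ (div_pos hL0 hRpos)).ne'
        measure_closedBall_lt_top.ne).ne'
    field_simp
  calc ∫ ξ, ‖a ξ - a η‖ * (R ^ n * ‖g (R • (ξ - η))‖)
      ≤ ∫ ξ, (f1 ξ + 2 * A * R ^ n * h (R • (ξ - η))) := by
        refine integral_mono_of_nonneg (Eventually.of_forall fun ξ => by positivity)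
          (hf1i.add (hhs.const_mul _)) ?_
        filter_upwards [hA] with ξ hξ
        have hb : ‖a ξ - a η‖ ≤ 2 * A := by linarith [norm_sub_le (a ξ) (a η)]
        by_cases hm : ξ ∈ closedBall η (L / R)
        · have hm' : R • (ξ - η) ∈ closedBall (0 : Eucl n) L := by
            rw [mem_closedBall, dist_eq_norm] at hm
            rw [mem_closedBall_zero_iff, norm_smul, Real.norm_of_nonneg hRpos.le]
            rwa [le_div_iff₀' hRpos] at hm
          have e1 : f1 ξ = ‖a ξ - a η‖ * (R ^ n * G) := Set.indicator_of_mem hm _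
          have e2 : h (R • (ξ - η)) = 0 := Set.indicator_of_notMem (by simpa using hm') _
          simp only [e1, e2]
          rw [mul_zero, add_zero]
          gcongr
          exact hG _
        · have hm' : R • (ξ - η) ∈ (closedBall (0 : Eucl n) L)ᶜ := by
            rw [mem_closedBall, dist_eq_norm] at hm
            rw [Set.mem_compl_iff, mem_closedBall_zero_iff, norm_smul, Real.norm_of_nonneg hRpos.le]
            rwa [le_div_iff₀' hRpos] at hm
          have e1 : f1 ξ = 0 := Set.indicator_of_notMem hm _
          have e2 : h (R • (ξ - η)) = ‖g (R • (ξ - η))‖ := Set.indicator_of_mem hm' _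
          simp only [e1, e2]
          rw [zero_add, mul_assoc]
          gcongr
    _ = G * V * (⨍ y in closedBall η (L / R), ‖a y - a η‖) +
        2 * A * ∫ z in (closedBall (0 : Eucl n) L)ᶜ, ‖g z‖ := by
        rw [integral_add hf1i (hhs.const_mul _), integral_const_mul, hf1I, hhI]
        field_simp
    _ < ε := by
        have : 2 * A * ∫ z in (closedBall (0 : Eucl n) L)ᶜ, ‖g z‖ ≤ 2 * A * δ := by gcongr
        linarith

lemma memLp_two_of_bdd {n : ℕ} {f : Eucl n → ℂ} (hf : Integrable f) (B : ℝ)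
    (hB : ∀ᵐ x, ‖f x‖ ≤ B) : MemLp f 2 (volume : Measure (Eucl n)) := by
  rw [memLp_two_iff_integrable_sq_norm hf.1]
  refine (hf.norm.const_mul B).mono' (hf.1.norm.pow 2) ?_
  filter_upwards [hB] with x hx
  rw [Real.norm_of_nonneg (by positivity), sq]
  gcongr

lemma key_bound {n : ℕ} (FP : FourierPlancherelPair n) (a : Eucl n → ℂ)
    (ha : MemLp a ⊤ (volume : Measure (Eucl n))) (v : Eucl n → ℂ) (hv : Integrable v)
    (hv2 : MemLp v 2 (volume : Measure (Eucl n))) (hg : Integrable (fourierInt v))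
    (z : ℂ) :
    ∀ᵐ x, ‖(FP.Finv (mulOp a ha (FP.F (hv2.toLp v))) : Eucl n → ℂ) x - z * v x‖ ≤
      ((2 * Real.pi) ^ n)⁻¹ * ∫ ξ, ‖a ξ - z‖ * ‖fourierInt v ξ‖ := by
  set g := fourierInt v with hgdef
  have hg2 : MemLp g 2 (volume : Measure (Eucl n)) := by
    refine memLp_two_of_bdd hg (∫ x, ‖v x‖) (Eventually.of_forall fun ξ => ?_)
    refine (norm_integral_le_integral_norm _).trans_eq ?_
    congr 1; ext x
    rw [norm_mul, Complex.norm_exp]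
    simp
  have hF := FP.F_int v hv hv2
  have hFg : FP.F (hv2.toLp v) = hg2.toLp g := by
    apply Lp.ext
    exact hF.trans hg2.coeFn_toLp.symm
  have hag2 : MemLp (a • g) 2 (volume : Measure (Eucl n)) := hg2.smul ha
  have hag1 : Integrable (a • g) := by
    have := (memLp_one_iff_integrable.2 hg).smul (p := ⊤) (q := 1) (r := 1) ha
    exact memLp_one_iff_integrable.1 this
  have hmul : mulOp a ha (FP.F (hv2.toLp v)) = hag2.toLp (a • g) := by
    unfold mulOp
    rw [MemLp.toLp_eq_toLp_iff, ]
    filter_upwards [hF] with x hx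
    simp [hx, hgdef]
  have h1 := FP.Finv_int (a • g) hag1 hag2
  have h2 := FP.Finv_int g hg hg2
  rw [← hFg, FP.inv_comp] at h2
  rw [hmul]
  filter_upwards [h1, h2, hv2.coeFn_toLp] with x hx1 hx2 hx3
  rw [hx1, ← hx3, hx2]
  unfold fourierIntInv
  have hint : ∀ f : Eucl n → ℂ, Integrable f → Integrable (fun ξ : Eucl n =>
      Complex.exp (Complex.I * ((inner ℝ x ξ : ℝ) : ℂ)) * f ξ) := by
    intro f hf
    refine hf.bdd_mul (c := 1) ?_ (Eventually.of_forall fun ξ => ?_)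
    · exact (by fun_prop : Continuous fun ξ : Eucl n =>
        Complex.exp (Complex.I * ((inner ℝ x ξ : ℝ) : ℂ))).aestronglyMeasurable
    · rw [Complex.norm_exp]; simp
  rw [smul_eq_mul (a := (((2 * Real.pi) ^ n : ℝ)⁻¹ : ℂ)), smul_eq_mul (a := (((2 * Real.pi) ^ n : ℝ)⁻¹ : ℂ))]
  rw [mul_left_comm z, ← mul_sub, ← integral_const_mul,
    ← integral_sub (hint _ hag1) ((hint _ hg).const_mul z), norm_mul]
  have hpi : ‖(((2 * Real.pi) ^ n : ℝ)⁻¹ : ℂ)‖ = ((2 * Real.pi) ^ n)⁻¹ := by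
    rw [norm_inv, Complex.norm_real, Real.norm_of_nonneg (by positivity)]
  rw [hpi]
  gcongr
  refine (norm_integral_le_integral_norm _).trans_eq ?_
  congr 1; ext ξ
  have : Complex.exp (Complex.I * ((inner ℝ x ξ : ℝ) : ℂ)) * (a • g) ξ -
    z * (Complex.exp (Complex.I * ((inner ℝ x ξ : ℝ) : ℂ)) * g ξ) =
    Complex.exp (Complex.I * ((inner ℝ x ξ : ℝ) : ℂ)) * ((a ξ - z) * g ξ) := by
    simp only [Pi.smul_apply', smul_eq_mul]; ring
  rw [this, norm_mul, norm_mul, Complex.norm_exp]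
  simp

lemma fourierInt_modulated {n : ℕ} (φ : Eucl n → ℂ) (c : ℂ) (η y : Eucl n) (R : ℝ) (hR : 0 < R)
    (ξ : Eucl n) :
    fourierInt (fun x => c * (Complex.exp (Complex.I * ((inner ℝ x η : ℝ) : ℂ)) *
      φ (R⁻¹ • (x - y)))) ξ =
    c * Complex.exp (-(Complex.I * ((inner ℝ y (ξ - η) : ℝ) : ℂ))) *
      ((R ^ n : ℝ) * fourierInt φ (R • (ξ - η))) := by
  unfold fourierInt
  set H : Eucl n → ℂ := fun z => c * Complex.exp (-(Complex.I * ((inner ℝ y (ξ - η) : ℝ) : ℂ))) *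
    (Complex.exp (-(Complex.I * ((inner ℝ z (R • (ξ - η)) : ℝ) : ℂ))) * φ z) with hH
  have h1 : ∀ x : Eucl n, Complex.exp (-(Complex.I * ((inner ℝ x ξ : ℝ) : ℂ))) *
      (c * (Complex.exp (Complex.I * ((inner ℝ x η : ℝ) : ℂ)) * φ (R⁻¹ • (x - y)))) =
      H (R⁻¹ • (x - y)) := by
    intro x
    simp only [hH]
    have : Complex.exp (-(Complex.I * ((inner ℝ x ξ : ℝ) : ℂ))) *
        Complex.exp (Complex.I * ((inner ℝ x η : ℝ) : ℂ)) =
        Complex.exp (-(Complex.I * ((inner ℝ y (ξ - η) : ℝ) : ℂ))) *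
        Complex.exp (-(Complex.I * ((inner ℝ (R⁻¹ • (x - y)) (R • (ξ - η)) : ℝ) : ℂ))) := by
      rw [← Complex.exp_add, ← Complex.exp_add]
      congr 1
      rw [real_inner_smul_left, real_inner_smul_right, ← mul_assoc, inv_mul_cancel₀ hR.ne', one_mul]
      simp only [inner_sub_left, inner_sub_right]
      push_cast
      ring
    linear_combination (c * φ (R⁻¹ • (x - y))) * this
  simp_rw [h1]
  rw [integral_sub_right_eq_self (fun x => H (R⁻¹ • x)) y,
    Measure.integral_comp_inv_smul_of_nonneg volume H hR.le, hH, integral_const_mul]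
  simp only [finrank_euclideanSpace, Fintype.card_fin, Complex.real_smul]
  push_cast
  ring

lemma fourierInt_bump_integrable {n : ℕ} (φ : Eucl n → ℂ) (h1 : HasCompactSupport φ)
    (h2 : ContDiff ℝ (⊤ : ℕ∞) φ) : Integrable (fourierInt φ) := by
  set f : SchwartzMap (Eucl n) ℂ := h1.toSchwartzMap h2 with hf
  have h : fourierInt φ = fun ξ => (FourierTransform.fourier f : SchwartzMap (Eucl n) ℂ)
      ((2 * Real.pi)⁻¹ • ξ) := by
    ext ξ
    rw [SchwartzMap.fourier_coe, Real.fourier_eq']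
    unfold fourierInt
    congr 1; ext x
    rw [smul_eq_mul]
    congr 2
    rw [real_inner_smul_right]
    push_cast
    have : (Real.pi : ℂ) ≠ 0 := by exact_mod_cast Real.pi_ne_zero
    field_simp
  rw [h]
  exact (FourierTransform.fourier f : SchwartzMap (Eucl n) ℂ).integrable.comp_smul
    (by positivity)

lemma fourierInt_norm_le {n : ℕ} (v : Eucl n → ℂ) (ξ : Eucl n) :
    ‖fourierInt v ξ‖ ≤ ∫ x, ‖v x‖ := by
  refine (norm_integral_le_integral_norm _).trans_eq ?_
  congr 1; ext x
  rw [norm_mul, Complex.norm_exp]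
  simp

lemma wLpNorm_eq {n : ℕ} (f : Eucl n → ℂ) (p : ℝ) (hp : 1 < p) (w : Eucl n → ℝ≥0∞)
    (hwmeas : Measurable w) (hw : ∀ᵐ x : Eucl n, 0 < w x ∧ w x < ∞) :
    wLpNorm f p w = eLpNorm f (ENNReal.ofReal p) (volume.withDensity fun x => w x ^ p) := by
  have hp0 : 0 < p := by linarith
  rw [eLpNorm_eq_lintegral_rpow_enorm_toReal (by simpa using hp0) ENNReal.ofReal_ne_top,
    ENNReal.toReal_ofReal hp0.le,
    lintegral_withDensity_eq_lintegral_mul_non_measurable _ (hwmeas.pow_const p)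
      (by filter_upwards [hw] with x hx using ENNReal.rpow_lt_top_of_nonneg hp0.le hx.2.ne)]
  unfold wLpNorm
  congr 2; ext x
  rw [mul_comm]; rfl

lemma weight_ball {n : ℕ} (p q : ℝ) (hp : 1 < p)
    (hpq : 1 / p + 1 / q = 1) (w : Eucl n → ℝ≥0∞) (hwmeas : Measurable w)
    (hw : ∀ᵐ x : Eucl n, 0 < w x ∧ w x < ∞) (hBM : BMCondition w p q) :
    ∃ D : ℝ≥0∞, D ≠ ∞ ∧ ∀ (y : Eucl n) (r : ℝ), 0 < r →
      (∫⁻ x in ball y r, w x ^ p) ≠ 0 ∧ (∫⁻ x in ball y r, w x ^ p) ≠ ∞ ∧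
      (∫⁻ x in ball y (2 * r), w x ^ p) ^ (1 / p) ≤ D * (∫⁻ x in ball y r, w x ^ p) ^ (1 / p) := by
  obtain ⟨K, hK, hB⟩ := hBM
  have hp0 : 0 < p := by linarith
  have hconj : p.HolderConjugate q := by
    refine (Real.holderConjugate_iff).2 ⟨hp, by simpa using hpq⟩
  have hq0 : 0 < q := hconj.symm.pos
  have hvpos : ∀ (y : Eucl n) (r : ℝ), 0 < r → volume (ball y r) ≠ 0 :=
    fun y r hr => (measure_ball_pos _ _ hr).ne'
  have hvfin : ∀ (y : Eucl n) (r : ℝ), volume (ball y r) ≠ ∞ := fun y r => measure_ball_lt_top.ne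
  have gen : ∀ (y : Eucl n) (r : ℝ), 0 < r → ∀ f : Eucl n → ℝ≥0∞, Measurable f →
      (∀ᵐ x, 0 < f x) → (∫⁻ x in ball y r, f x) ≠ 0 := by
    intro y r hr f hf hpos h0
    rw [lintegral_eq_zero_iff hf] at h0
    have : ∀ᵐ x ∂(volume.restrict (ball y r)), False := by
      filter_upwards [h0, ae_restrict_of_ae hpos] with x h1 h2
      exact h2.ne' h1
    rw [eventually_false_iff_eq_bot, ae_eq_bot, Measure.restrict_eq_zero] at this
    exact hvpos y r hr this
  have hP0 : ∀ (y : Eucl n) (r : ℝ), 0 < r → (∫⁻ x in ball y r, w x ^ p) ≠ 0 := by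
    intro y r hr
    refine gen y r hr _ (hwmeas.pow_const p) ?_
    filter_upwards [hw] with x hx using ENNReal.rpow_pos hx.1 hx.2.ne
  have hQ0 : ∀ (y : Eucl n) (r : ℝ), 0 < r → (∫⁻ x in ball y r, (w x)⁻¹ ^ q) ≠ 0 := by
    intro y r hr
    refine gen y r hr _ (hwmeas.inv.pow_const q) ?_
    filter_upwards [hw] with x hx using
      ENNReal.rpow_pos (ENNReal.inv_pos.2 hx.2.ne) (ENNReal.inv_ne_top.2 hx.1.ne')
  have hBM' : ∀ (y : Eucl n) (r : ℝ), 0 < r → (∫⁻ x in ball y r, w x ^ p) ^ (1 / p) *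
      (∫⁻ x in ball y r, (w x)⁻¹ ^ q) ^ (1 / q) ≤ K * volume (ball y r) := by
    intro y r hr
    have := hB y r hr
    rw [mul_assoc, mul_comm, ← div_eq_mul_inv] at this
    rwa [ENNReal.div_le_iff (hvpos y r hr) (hvfin y r)] at this
  have hPfin : ∀ (y : Eucl n) (r : ℝ), 0 < r → (∫⁻ x in ball y r, w x ^ p) ≠ ∞ := by
    intro y r hr h
    have := hBM' y r hr
    rw [h, ENNReal.top_rpow_of_pos (by positivity), ENNReal.top_mul] at this
    · exact (ENNReal.mul_ne_top hK (hvfin y r)) (top_le_iff.1 this)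
    · rw [ne_eq, ENNReal.rpow_eq_zero_iff_of_pos (by positivity)]
      exact hQ0 y r hr
  refine ⟨K * ENNReal.ofReal (2 ^ n), ENNReal.mul_ne_top hK ENNReal.ofReal_ne_top,
    fun y r hr => ⟨hP0 y r hr, hPfin y r hr, ?_⟩⟩
  set P1 := (∫⁻ x in ball y r, w x ^ p) ^ (1 / p)
  set P2 := (∫⁻ x in ball y (2 * r), w x ^ p) ^ (1 / p)
  set Q1 := (∫⁻ x in ball y r, (w x)⁻¹ ^ q) ^ (1 / q)
  set Q2 := (∫⁻ x in ball y (2 * r), (w x)⁻¹ ^ q) ^ (1 / q)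
  have hH : volume (ball y r) ≤ P1 * Q1 := by
    have := ENNReal.lintegral_mul_le_Lp_mul_Lq (volume.restrict (ball y r)) hconj
      hwmeas.aemeasurable hwmeas.inv.aemeasurable
    refine le_trans (le_of_eq ?_) this
    rw [← setLIntegral_one]
    refine lintegral_congr_ae ?_
    filter_upwards [ae_restrict_of_ae hw] with x hx
    simp [ENNReal.mul_inv_cancel hx.1.ne' hx.2.ne]
  have hQ : Q1 ≤ Q2 := by
    refine ENNReal.rpow_le_rpow (lintegral_mono_set (ball_subset_ball (by linarith)))
      (by positivity)
  have hV : volume (ball y (2 * r)) = ENNReal.ofReal (2 ^ n) * volume (ball y r) := by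
    rw [Measure.addHaar_ball_mul_of_pos volume y two_pos, Measure.addHaar_ball_center volume y r]
    simp
  have h2 := hBM' y (2 * r) (by linarith)
  rw [hV] at h2
  have h3 : volume (ball y r) * P2 ≤ volume (ball y r) * (K * ENNReal.ofReal (2 ^ n) * P1) := by
    calc volume (ball y r) * P2 ≤ P1 * Q1 * P2 := by gcongr
      _ ≤ P1 * Q2 * P2 := by gcongr
      _ = P1 * (P2 * Q2) := by ring
      _ ≤ P1 * (K * (ENNReal.ofReal (2 ^ n) * volume (ball y r))) := by gcongr
      _ = _ := by ring
  exact (ENNReal.mul_le_mul_iff_right (hvpos y r hr) (hvfin y r)).1 h3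

lemma core_bound {n : ℕ} (p : ℝ) (hp : 1 < p)
    (w : Eucl n → ℝ≥0∞) (hwmeas : Measurable w)
    (hw : ∀ᵐ x : Eucl n, 0 < w x ∧ w x < ∞)
    (C : Set (Eucl n))
    (a : Eucl n → ℂ) (ha : MemLp a ⊤ (volume : Measure (Eucl n)))
    (FP : FourierPlancherelPair n) (D : ℝ≥0∞)
    (hD : ∀ (y : Eucl n) (r : ℝ), 0 < r →
      (∫⁻ x in ball y r, w x ^ p) ≠ 0 ∧ (∫⁻ x in ball y r, w x ^ p) ≠ ∞ ∧
      (∫⁻ x in ball y (2 * r), w x ^ p) ^ (1 / p) ≤ D * (∫⁻ x in ball y r, w x ^ p) ^ (1 / p))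
    (φ : Eucl n → ℂ) (hφ1 : HasCompactSupport φ) (hφ2 : ContDiff ℝ (⊤ : ℕ∞) φ)
    (hφle : ∀ x, ‖φ x‖ ≤ 1) (hφone : ∀ x ∈ ball (0 : Eucl n) 1, φ x = 1)
    (hφsupp : ∀ x, x ∉ ball (0 : Eucl n) 2 → φ x = 0)
    (η y : Eucl n) (R : ℝ) (hR : 0 < R) (hyC : ball y (2 * R) ⊆ C) :
    ∃ (u : Eucl n → ℂ) (hu2 : MemLp (C.indicator u) 2 (volume : Measure (Eucl n))),
      wLpNorm (C.indicator u) p w = 1 ∧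
      ‖a η‖ₑ ≤ wLpNorm (WOp FP a ha C u hu2) p w + ENNReal.ofReal (((2 * Real.pi) ^ n)⁻¹ *
        ∫ ξ, ‖a ξ - a η‖ * (R ^ n * ‖fourierInt φ (R • (ξ - η))‖)) * D := by
  have hp0 : 0 < p := by linarith
  set E : ℝ := ((2 * Real.pi) ^ n)⁻¹ *
        ∫ ξ, ‖a ξ - a η‖ * (R ^ n * ‖fourierInt φ (R • (ξ - η))‖) with hE
  have hE0 : 0 ≤ E := mul_nonneg (by positivity) (integral_nonneg fun ξ => by positivity)
  set μ : Measure (Eucl n) := volume.withDensity fun x => w x ^ p with hμ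
  have hμac : μ ≪ volume := withDensity_absolutelyContinuous _ _
  have hwn : ∀ f : Eucl n → ℂ, wLpNorm f p w = eLpNorm f (ENNReal.ofReal p) μ :=
    fun f => wLpNorm_eq f p hp w hwmeas hw
  set u0 : Eucl n → ℂ := fun x => Complex.exp (Complex.I * ((inner ℝ x η : ℝ) : ℂ)) *
    φ (R⁻¹ • (x - y)) with hu0
  have hu0norm : ∀ x, ‖u0 x‖ = ‖φ (R⁻¹ • (x - y))‖ := by
    intro x
    simp only [hu0]
    rw [norm_mul, Complex.norm_exp]; simp
  have hmem : ∀ (x : Eucl n) (t : ℝ), R⁻¹ • (x - y) ∈ ball (0 : Eucl n) t ↔ x ∈ ball y (t * R) := by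
    intro x t
    rw [mem_ball_zero_iff, norm_smul, Real.norm_of_nonneg (by positivity), mem_ball, dist_eq_norm,
      inv_mul_lt_iff₀ hR, mul_comm]
  have hu0zero : ∀ x, x ∉ ball y (2 * R) → u0 x = 0 := by
    intro x hx
    simp only [hu0]
    rw [hφsupp _ (by rwa [hmem]), mul_zero]
  have hu0one : ∀ x ∈ ball y R, ‖u0 x‖ = 1 := by
    intro x hx
    rw [hu0norm, hφone _ (by rw [hmem, one_mul]; exact hx), norm_one]
  have hu0cont : Continuous u0 := by
    have := hφ2.continuous
    simp only [hu0]
    fun_prop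
  have hu0cs : HasCompactSupport u0 := by
    refine HasCompactSupport.intro (isCompact_closedBall y (2 * R)) fun x hx => hu0zero x fun h =>
      hx (ball_subset_closedBall h)
  set P1 := (∫⁻ x in ball y R, w x ^ p) ^ (1 / p) with hP1
  set P2 := (∫⁻ x in ball y (2 * R), w x ^ p) ^ (1 / p) with hP2
  obtain ⟨h10, h1f, h21⟩ := hD y R hR
  obtain ⟨h20, h2f, -⟩ := hD y (2 * R) (by linarith)
  have hμB : ∀ r, μ (ball y r) = ∫⁻ x in ball y r, w x ^ p := fun r =>
    withDensity_apply _ measurableSet_ball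
  have hind : ∀ (r : ℝ) (c : ℂ), eLpNorm ((ball y r).indicator fun _ => c) (ENNReal.ofReal p) μ =
      ‖c‖ₑ * (∫⁻ x in ball y r, w x ^ p) ^ (1 / p) := by
    intro r c
    rw [eLpNorm_indicator_const measurableSet_ball (by simpa using hp0) ENNReal.ofReal_ne_top, hμB,
      ENNReal.toReal_ofReal hp0.le]
  set s := eLpNorm u0 (ENNReal.ofReal p) μ with hs
  have hs1 : P1 ≤ s := by
    have := hind R 1
    rw [enorm_one, one_mul] at this
    rw [hP1, ← this]
    refine eLpNorm_mono fun x => ?_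
    by_cases hx : x ∈ ball y R
    · rw [Set.indicator_of_mem hx, hu0one x hx, norm_one]
    · rw [Set.indicator_of_notMem hx, norm_zero]; exact norm_nonneg _
  have hs2 : s ≤ P2 := by
    have := hind (2 * R) 1
    rw [enorm_one, one_mul] at this
    rw [hP2, ← this]
    refine eLpNorm_mono fun x => ?_
    by_cases hx : x ∈ ball y (2 * R)
    · rw [Set.indicator_of_mem hx, hu0norm, norm_one]; exact hφle _
    · rw [Set.indicator_of_notMem hx, norm_zero, hu0zero x hx, norm_zero]
  have hs0 : s ≠ 0 := by
    refine (lt_of_lt_of_le ?_ hs1).ne'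
    exact ENNReal.rpow_pos (pos_iff_ne_zero.2 h10) h1f
  have hsf : s ≠ ∞ := by
    refine (lt_of_le_of_lt hs2 ?_).ne
    exact ENNReal.rpow_lt_top_of_nonneg (by positivity) h2f
  set c : ℂ := (((s.toReal)⁻¹ : ℝ) : ℂ) with hc
  have hstr : 0 < s.toReal := ENNReal.toReal_pos hs0 hsf
  have hcn : ‖c‖ = (s.toReal)⁻¹ := by
    rw [hc, Complex.norm_real, Real.norm_of_nonneg (by positivity)]
  have hce : ‖c‖ₑ * s = 1 := by
    rw [← ofReal_norm, hcn, ENNReal.ofReal_inv_of_pos hstr, ENNReal.ofReal_toReal hsf,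
      ENNReal.inv_mul_cancel hs0 hsf]
  set v : Eucl n → ℂ := fun x => c * u0 x with hv
  have hCv : C.indicator v = v := by
    rw [Set.indicator_eq_self]
    intro x hx
    by_contra hxC
    exact hx (by simp only [hv]; rw [hu0zero x fun h => hxC (hyC h), mul_zero])
  have hvcont : Continuous v := continuous_const.mul hu0cont
  have hvcs : HasCompactSupport v := hu0cs.mul_left
  have hvint : Integrable v := hvcont.integrable_of_hasCompactSupport hvcs
  have hv2 : MemLp v 2 (volume : Measure (Eucl n)) := hvcont.memLp_of_hasCompactSupport hvcs
  have hvn : eLpNorm v (ENNReal.ofReal p) μ = 1 := by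
    rw [← hce]
    exact eLpNorm_const_smul c u0 _ _
  have hF : fourierInt v = fun ξ =>
      c * Complex.exp (-(Complex.I * ((inner ℝ y (ξ - η) : ℝ) : ℂ))) *
      ((R ^ n : ℝ) * fourierInt φ (R • (ξ - η))) :=
    funext fun ξ => fourierInt_modulated φ c η y R hR ξ
  have hFn : ∀ ξ, ‖fourierInt v ξ‖ = ‖c‖ * (R ^ n * ‖fourierInt φ (R • (ξ - η))‖) := by
    intro ξ
    rw [hF]
    simp only [norm_mul, Complex.norm_exp, Complex.norm_real]
    rw [Real.norm_of_nonneg (by positivity : (0:ℝ) ≤ R ^ n)]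
    simp
  have hFint : Integrable (fourierInt v) := by
    rw [hF]
    have h := (((fourierInt_bump_integrable φ hφ1 hφ2).comp_smul hR.ne').comp_sub_right η).const_mul
      ((R ^ n : ℝ) : ℂ)
    refine h.bdd_mul (c := ‖c‖) ?_ (Eventually.of_forall fun ξ => ?_)
    · exact (by fun_prop : Continuous fun ξ : Eucl n =>
        c * Complex.exp (-(Complex.I * ((inner ℝ y (ξ - η) : ℝ) : ℂ)))).aestronglyMeasurable
    · rw [norm_mul, Complex.norm_exp]; simp
  have hkey := key_bound FP a ha v hvint hv2 hFint (a η)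
  have hbd : ((2 * Real.pi) ^ n)⁻¹ * ∫ ξ, ‖a ξ - a η‖ * ‖fourierInt v ξ‖ = ‖c‖ * E := by
    simp_rw [hFn, mul_left_comm _ ‖c‖ _]
    rw [integral_const_mul, hE]
    ring
  rw [hbd] at hkey
  have hu2 : MemLp (C.indicator v) 2 (volume : Measure (Eucl n)) := by rwa [hCv]
  refine ⟨v, hu2, by rw [hCv, hwn, hvn], ?_⟩
  have hTeq : hu2.toLp (C.indicator v) = hv2.toLp v := by
    rw [MemLp.toLp_eq_toLp_iff, hCv]
  rw [hwn]
  unfold WOp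
  rw [hTeq]
  set T : Eucl n → ℂ := (FP.Finv (mulOp a ha (FP.F (hv2.toLp v))) : Eucl n → ℂ) with hT
  have hTm : AEStronglyMeasurable T μ := (Lp.aestronglyMeasurable _).mono_ac hμac
  have hvm : AEStronglyMeasurable v μ := hvcont.aestronglyMeasurable
  set B := ball y (2 * R) with hBdef
  have hBm : MeasurableSet B := measurableSet_ball
  calc ‖a η‖ₑ = eLpNorm (fun x => a η * v x) (ENNReal.ofReal p) μ := by
        have := eLpNorm_const_smul (a η) v (ENNReal.ofReal p) μ
        rw [hvn, mul_one] at this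
        exact this.symm
    _ = eLpNorm (B.indicator T + B.indicator (fun x => a η * v x - T x)) (ENNReal.ofReal p) μ := by
        congr 1
        ext x
        by_cases hx : x ∈ B
        · simp [hx]
        · simp [hx, hv, hu0zero x hx]
    _ ≤ eLpNorm (B.indicator T) (ENNReal.ofReal p) μ +
        eLpNorm (B.indicator (fun x => a η * v x - T x)) (ENNReal.ofReal p) μ :=
        eLpNorm_add_le (hTm.indicator hBm) (((hvm.const_mul _).sub hTm).indicator hBm)
          (by simpa using hp.le)
    _ ≤ eLpNorm (C.indicator T) (ENNReal.ofReal p) μ + ENNReal.ofReal E * D := by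
        gcongr
        · refine eLpNorm_mono fun x => ?_
          exact norm_indicator_le_of_subset hyC T x
        · calc eLpNorm (B.indicator (fun x => a η * v x - T x)) (ENNReal.ofReal p) μ
              ≤ eLpNorm (B.indicator (fun _ => c * (E : ℂ))) (ENNReal.ofReal p) μ := by
                refine eLpNorm_mono_ae ?_
                filter_upwards [hμac.ae_le hkey] with x hx
                by_cases hxB : x ∈ B
                · rw [Set.indicator_of_mem hxB, Set.indicator_of_mem hxB, norm_sub_rev, norm_mul c,
                    Complex.norm_real E, Real.norm_of_nonneg hE0]
                  exact hx
                · simp [hxB]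
            _ = ‖c‖ₑ * ENNReal.ofReal E * P2 := by
                rw [hind, enorm_mul, ← ofReal_norm (E : ℂ), Complex.norm_real,
                  Real.norm_of_nonneg hE0]
            _ ≤ ‖c‖ₑ * ENNReal.ofReal E * (D * s) := by
                gcongr
                exact h21.trans (by gcongr)
            _ = ENNReal.ofReal E * D * (‖c‖ₑ * s) := by ring
            _ = ENNReal.ofReal E * D := by rw [hce, mul_one]

/-- lower bound for the norm of a Wiener–Hopf type operator on the weighted
Lebesgue space `L^p(C, w)` over an open cone `C`, for a weight `w` satisfying the
Berezhnoi–Muckenhoupt condition. -/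
theorem weighted_norm_lower_bound (n : ℕ) (hn : 1 ≤ n) (p q : ℝ) (hp : 1 < p)
    (hpq : 1 / p + 1 / q = 1) (w : Eucl n → ℝ≥0∞) (hwmeas : Measurable w)
    (hw : ∀ᵐ x : Eucl n, 0 < w x ∧ w x < ∞) (hBM : BMCondition w p q)
    (C : Set (Eucl n)) (hCopen : IsOpen C) (hCne : C.Nonempty)
    (hcone : ∀ x ∈ C, ∀ α : ℝ, 0 < α → α • x ∈ C)
    (a : Eucl n → ℂ) (ha : MemLp a ⊤ (volume : Measure (Eucl n)))
    (FP : FourierPlancherelPair n) (M : ℝ) (hM0 : 0 ≤ M)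
    (hM : ∀ (u : Eucl n → ℂ) (hu2 : MemLp u 2 (volume : Measure (Eucl n))),
      wLpNorm u p w < ∞ →
      wLpNorm (FP.Finv (mulOp a ha (FP.F (hu2.toLp u))) : Eucl n → ℂ) p w
        ≤ ENNReal.ofReal M * wLpNorm u p w) :
    eLpNorm a ⊤ volume ≤
      sSup { t : ℝ≥0∞ |
        ∃ (u : Eucl n → ℂ) (hu2 : MemLp (C.indicator u) 2 (volume : Measure (Eucl n))),
          wLpNorm (C.indicator u) p w < ∞ ∧ wLpNorm (C.indicator u) p w ≤ 1 ∧
          t = wLpNorm (WOp FP a ha C u hu2) p w } := by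
  obtain ⟨D, hDf, hD⟩ := weight_ball p q hp hpq w hwmeas hw hBM
  obtain ⟨x0, hx0⟩ := hCne
  obtain ⟨r0, hr0, hball⟩ := Metric.isOpen_iff.1 hCopen x0 hx0
  set b : ContDiffBump (0 : Eucl n) := ⟨1, 2, one_pos, one_lt_two⟩ with hb
  set φ : Eucl n → ℂ := fun x => ((b x : ℝ) : ℂ) with hφ
  have hφ1 : HasCompactSupport φ :=
    b.hasCompactSupport.comp_left (g := fun t : ℝ => (t : ℂ)) (by simp)
  have hφ2 : ContDiff ℝ (⊤ : ℕ∞) φ := Complex.ofRealCLM.contDiff.comp b.contDiff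
  have hφle : ∀ x, ‖φ x‖ ≤ 1 := by
    intro x
    simp only [hφ]
    rw [Complex.norm_real, Real.norm_of_nonneg b.nonneg]
    exact b.le_one
  have hφone : ∀ x ∈ ball (0 : Eucl n) 1, φ x = 1 := by
    intro x hx
    simp only [hφ]
    rw [b.one_of_mem_closedBall (ball_subset_closedBall hx), Complex.ofReal_one]
  have hφsupp : ∀ x, x ∉ ball (0 : Eucl n) 2 → φ x = 0 := by
    intro x hx
    simp only [hφ]
    rw [b.zero_of_le_dist (by simpa using hx), Complex.ofReal_zero]
  set A : ℝ := (eLpNorm a ⊤ volume).toReal with hAdef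
  have hA : ∀ᵐ x, ‖a x‖ ≤ A := by
    have h1 := ae_le_eLpNormEssSup (f := a) (μ := (volume : Measure (Eucl n)))
    have h2 := ha.2.ne
    filter_upwards [h1] with x hx
    rw [← eLpNorm_exponent_top] at hx
    rw [← toReal_enorm]
    exact ENNReal.toReal_mono h2 hx
  have hloc : LocallyIntegrable a (volume : Measure (Eucl n)) :=
    ha.locallyIntegrable le_top
  rw [eLpNorm_exponent_top]
  refine eLpNormEssSup_le_of_ae_enorm_bound ?_
  filter_upwards [hA, IsUnifLocDoublingMeasure.ae_tendsto_average_norm_sub volume hloc 1]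
    with η hη hleb
  have hleb' : Tendsto (fun r : ℝ => ⨍ y in closedBall η r, ‖a y - a η‖)
      (nhdsWithin 0 (Set.Ioi 0)) (nhds 0) := by
    refine hleb (fun _ => η) id tendsto_id ?_
    filter_upwards [self_mem_nhdsWithin] with r hr
    have hr' : (0 : ℝ) < r := hr
    simp [hr'.le]
  have hlim := conv_zero (fourierInt φ) (fourierInt_bump_integrable φ hφ1 hφ2) (∫ x, ‖φ x‖)
    (fourierInt_norm_le φ) a ha.1 A hA η hη hleb'
  have hlim2 := ENNReal.tendsto_ofReal (hlim.const_mul (((2 * Real.pi) ^ n)⁻¹))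
  rw [mul_zero, ENNReal.ofReal_zero] at hlim2
  have hlim3 := (ENNReal.Tendsto.mul_const (b := D) hlim2 (Or.inr hDf))
  rw [zero_mul] at hlim3
  have hlim4 := hlim3.const_add (sSup { t : ℝ≥0∞ |
        ∃ (u : Eucl n → ℂ) (hu2 : MemLp (C.indicator u) 2 (volume : Measure (Eucl n))),
          wLpNorm (C.indicator u) p w < ∞ ∧ wLpNorm (C.indicator u) p w ≤ 1 ∧
          t = wLpNorm (WOp FP a ha C u hu2) p w })
  rw [add_zero] at hlim4
  refine ge_of_tendsto hlim4 ?_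
  filter_upwards [eventually_gt_atTop (0 : ℝ)] with R hR
  have ht : 0 < 2 * R / r0 := by positivity
  have hyC : ball ((2 * R / r0) • x0) (2 * R) ⊆ C := by
    intro x hx
    have hx' : (2 * R / r0)⁻¹ • x ∈ C := by
      apply hball
      rw [mem_ball, dist_eq_norm] at hx ⊢
      have he : (2 * R / r0)⁻¹ • x - x0 = (2 * R / r0)⁻¹ • (x - (2 * R / r0) • x0) := by
        rw [smul_sub, inv_smul_smul₀ ht.ne']
      rw [he, norm_smul, Real.norm_of_nonneg (by positivity), inv_mul_lt_iff₀ ht]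
      rwa [div_mul_cancel₀ _ hr0.ne']
    have := hcone _ hx' _ ht
    rwa [smul_inv_smul₀ ht.ne'] at this
  obtain ⟨u, hu2, hun, hle⟩ := core_bound p hp w hwmeas hw C a ha FP D hD φ hφ1 hφ2 hφle
    hφone hφsupp η _ R hR hyC
  refine hle.trans ?_
  gcongr
  refine le_sSup ⟨u, hu2, by rw [hun]; exact ENNReal.one_lt_top, hun.le, rfl⟩

end
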